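/- Let Γ be a finite extensive-form game with perfect recall. If β* is a Nash equilibrium in behavioral strategies, then there exist a behavioral strategy profile β̃* and a belief system μ* such that (β*, β̃*, μ*) satisfies the Nash characterization. -/

import Mathlib

open scoped Classical

noncomputable section

/-- A finite extensive-form game.  Actions are labelled by natural numbers drawn from the
finite pool `actFinset`; a history is the list of actions taken so far; players are `Fin n`
and `P h = none` means that the chance player moves after `h`.  The information sets of
player `i` are `Info i j` for `j < m i`, and `infoIdx h` is the index of the information
set containing a nonterminal history `h` at which some player moves.  Payoffs `u i h` are
relevant on terminal histories. -/
structure EFG where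
  n : ℕ
  actFinset : Finset ℕ
  H : Finset (List ℕ)
  P : List ℕ → Option (Fin n)
  fc : List ℕ → ℕ → ℝ
  m : Fin n → ℕ
  Info : Fin n → ℕ → Finset (List ℕ)
  infoIdx : List ℕ → ℕ
  u : Fin n → List ℕ → ℝ
  empty_mem : ([] : List ℕ) ∈ H
  prefixClosed : ∀ h ∈ H, ∀ h' : List ℕ, h' <+: h → h' ∈ H
  act_mem : ∀ (h : List ℕ) (a : ℕ), h ++ [a] ∈ H → a ∈ actFinset
  fc_nonneg : ∀ h a, 0 ≤ fc h a
  fc_sum : ∀ h ∈ H, P h = none → (∃ a, h ++ [a] ∈ H) →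
    ∑ a ∈ actFinset.filter (fun a => h ++ [a] ∈ H), fc h a = 1
  info_spec : ∀ (i : Fin n) (j : ℕ) (h : List ℕ), j < m i →
    (h ∈ Info i j ↔ h ∈ H ∧ P h = some i ∧ (∃ a, h ++ [a] ∈ H) ∧ infoIdx h = j)
  infoIdx_lt : ∀ (i : Fin n), ∀ h ∈ H, P h = some i → (∃ a, h ++ [a] ∈ H) → infoIdx h < m i
  info_nonempty : ∀ (i : Fin n) (j : ℕ), j < m i → (Info i j).Nonempty
  info_actions : ∀ (i : Fin n) (j : ℕ), j < m i → ∀ h ∈ Info i j, ∀ h' ∈ Info i j,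
    ∀ a : ℕ, (h ++ [a] ∈ H ↔ h' ++ [a] ∈ H)
  act_unique : ∀ (h h' : List ℕ) (a : ℕ), h ∈ H → h' ∈ H → h ++ [a] ∈ H → h' ++ [a] ∈ H →
    P h = P h' ∧ infoIdx h = infoIdx h'

namespace EFG

/-- Behavioral strategy profiles (player, information-set index, action ↦ probability). -/
abbrev Profile (G : EFG) : Type := Fin G.n → ℕ → ℕ → ℝ

/-- Belief systems (player, information-set index, history ↦ probability). -/
abbrev Belief (G : EFG) : Type := Fin G.n → ℕ → List ℕ → ℝ

variable (G : EFG)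

/-- The set `Z` of terminal histories. -/
def Zset : Finset (List ℕ) := G.H.filter fun h => ∀ a : ℕ, h ++ [a] ∉ G.H

/-- The set `A(h)` of actions available after a history. -/
def A (h : List ℕ) : Finset ℕ := G.actFinset.filter fun a => h ++ [a] ∈ G.H

/-- The common action set `A(I_i^j)` of an information set. -/
def infoA (i : Fin G.n) (j : ℕ) : Finset ℕ := (G.Info i j).sup fun h => G.A h

/-- A behavioral strategy of player `i`: a probability distribution on `A(I_i^j)` for
each information set `I_i^j`. -/
def IsBehStrategy (i : Fin G.n) (b : ℕ → ℕ → ℝ) : Prop :=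
  ∀ j < G.m i, (∀ a ∈ G.infoA i j, 0 ≤ b j a) ∧ ∑ a ∈ G.infoA i j, b j a = 1

/-- A behavioral strategy profile. -/
def IsBehProfile (β : G.Profile) : Prop := ∀ i : Fin G.n, G.IsBehStrategy i (β i)

/-- The probability of action `a` at history `h`: the chance distribution if the chance
player moves, and the mover's behavioral strategy otherwise. -/
def moveProb (β : G.Profile) (h : List ℕ) (a : ℕ) : ℝ :=
  (G.P h).elim (G.fc h a) fun i => β i (G.infoIdx h) a

/-- Player `i`'s record `X_i` of the information sets he encounters along a history and the
actions he takes at them, accumulated starting from the prefix `pre`. -/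
def recordFrom (i : Fin G.n) : List ℕ → List ℕ → List (ℕ × ℕ)
  | _, [] => []
  | pre, b :: rest =>
    (if G.P pre = some i then [(G.infoIdx pre, b)] else []) ++ recordFrom i (pre ++ [b]) rest

/-- Perfect recall. -/
def PerfectRecall : Prop :=
  ∀ (i : Fin G.n) (j : ℕ), j < G.m i →
    ∀ h ∈ G.Info i j, ∀ h' ∈ G.Info i j, G.recordFrom i [] h = G.recordFrom i [] h'

/-- Product of the move probabilities along `rest`, continuing from the prefix `pre`. -/
def prodAlong (β : G.Profile) : List ℕ → List ℕ → ℝ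
  | _, [] => 1
  | pre, b :: rest => G.moveProb β pre b * prodAlong β (pre ++ [b]) rest

/-- `ω(h|β)`: the probability that the moves along `h` are played under `β`. -/
def omega (β : G.Profile) (h : List ℕ) : ℝ := G.prodAlong β [] h

/-- `ω(I_i^j|β)`. -/
def omegaInfo (i : Fin G.n) (j : ℕ) (β : G.Profile) : ℝ := ∑ h ∈ G.Info i j, G.omega β h

/-- Product of the move probabilities along `rest` from `pre`, disregarding player `i`'s
own moves. -/
def prodAlongNot (i : Fin G.n) (β : G.Profile) : List ℕ → List ℕ → ℝ
  | _, [] => 1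
  | pre, b :: rest =>
    (if G.P pre = some i then 1 else G.moveProb β pre b) * prodAlongNot i β (pre ++ [b]) rest

/-- `S^i(h|β)`: probability of the moves along `h`, disregarding player `i`'s own moves. -/
def Sh (i : Fin G.n) (β : G.Profile) (h : List ℕ) : ℝ := G.prodAlongNot i β [] h

/-- `S^i(I_i^j|β)`. -/
def SInfo (i : Fin G.n) (j : ℕ) (β : G.Profile) : ℝ := ∑ h ∈ G.Info i j, G.Sh i β h

/-- Product of the move probabilities along `rest` from `pre`, with the factor at prefixes
lying in `I_i^j` omitted. -/
def prodAlongSkip (i : Fin G.n) (j : ℕ) (β : G.Profile) : List ℕ → List ℕ → ℝ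
  | _, [] => 1
  | pre, b :: rest =>
    (if pre ∈ G.Info i j then 1 else G.moveProb β pre b) * prodAlongSkip i j β (pre ++ [b]) rest

/-- `q ∈ M(a, I_i^j)`: `I_i^q` is a first information set of player `i` after action `a`
(every history in `I_i^q` contains `a`, with no later action of `a` lying in any action set
of player `i`). -/
def FirstAfter (i : Fin G.n) (a : ℕ) (q : ℕ) : Prop :=
  q < G.m i ∧ ∀ h ∈ G.Info i q, ∃ l₁ l₂ : List ℕ,
    h = l₁ ++ a :: l₂ ∧ ∀ b ∈ l₂, ∀ p < G.m i, b ∉ G.infoA i p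

/-- `q ∈ M(I_i^j) = ∪_{a ∈ A(I_i^j)} M(a, I_i^j)`. -/
def MInfo (i : Fin G.n) (j : ℕ) (q : ℕ) : Prop := ∃ a ∈ G.infoA i j, G.FirstAfter i a q

/-- `q ∈ Λ(a, I_i^j)`: every history in `I_i^q` contains the action `a`. -/
def LambdaSet (i : Fin G.n) (a : ℕ) (q : ℕ) : Prop :=
  q < G.m i ∧ ∀ h ∈ G.Info i q, ∃ l₁ l₂ : List ℕ, h = l₁ ++ a :: l₂

/-- `ϱ^i_{I_i^j}(β, β̃)`: replace player `i`'s component of `β` by that of `β̃` at every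
information set `I_i^q` such that some history in `I_i^q` contains an action of `A(I_i^j)`. -/
def rho (i : Fin G.n) (j : ℕ) (β βt : G.Profile) : G.Profile := fun p q =>
  if p = i ∧ ∃ h ∈ G.Info i q, ∃ b ∈ h, b ∈ G.infoA i j then βt i q else β p q

/-- A belief system: a probability distribution on each information set. -/
def IsBelief (μ : G.Belief) : Prop :=
  ∀ (i : Fin G.n) (j : ℕ), j < G.m i →
    (∀ h ∈ G.Info i j, 0 ≤ μ i j h) ∧ ∑ h ∈ G.Info i j, μ i j h = 1

/-- A self-independent belief system for `β`:
`S^i(I_i^j|β) · μ^i_{I_i^j}(h) = S^i(h|β)`. -/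
def SelfIndep (β : G.Profile) (μ : G.Belief) : Prop :=
  ∀ (i : Fin G.n) (j : ℕ), j < G.m i → ∀ h ∈ G.Info i j,
    G.SInfo i j β * μ i j h = G.Sh i β h

/-- Auxiliary for `ν`: scan `rest` from `pre` for the subhistory lying in `I_i^j`, then
weight by the belief and multiply the move probabilities of the remaining moves (the move
taken at the subhistory itself being skipped). -/
def nuAux (i : Fin G.n) (j : ℕ) (β : G.Profile) (w : List ℕ → ℝ) : List ℕ → List ℕ → ℝ
  | _, [] => 0
  | pre, b :: rest =>
    if pre ∈ G.Info i j then w pre * G.prodAlong β (pre ++ [b]) rest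
    else nuAux i j β w (pre ++ [b]) rest

/-- `ν^i_{I_i^j}(h | a, β^{-I_i^j}, μ)` (it does not involve the component of `β` at
`I_i^j`). -/
def nu (i : Fin G.n) (j : ℕ) (β : G.Profile) (μ : G.Belief) (h : List ℕ) : ℝ :=
  G.nuAux i j β (μ i j) [] h

/-- `u^i((a, β^{-I_i^j}) ∧ I_i^j)`. -/
def uWedgeAct (i : Fin G.n) (j : ℕ) (a : ℕ) (β : G.Profile) : ℝ :=
  ∑ h ∈ G.Zset.filter (fun h => a ∈ h), G.u i h * G.prodAlongSkip i j β [] h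

/-- `u^i(β ∧ I_i^j)`. -/
def uWedge (i : Fin G.n) (j : ℕ) (β : G.Profile) : ℝ :=
  ∑ h ∈ G.Zset.filter (fun h => ∃ b ∈ h, b ∈ G.infoA i j), G.u i h * G.omega β h

/-- The conditional expected payoff `u^i(a, β^{-I_i^j}, μ | I_i^j)`. -/
def uCond (i : Fin G.n) (j : ℕ) (a : ℕ) (β : G.Profile) (μ : G.Belief) : ℝ :=
  ∑ h ∈ G.Zset.filter (fun h => a ∈ h), G.u i h * G.nu i j β μ h

/-- The expected payoff `u^i(β)`. -/
def uExp (i : Fin G.n) (β : G.Profile) : ℝ := ∑ h ∈ G.Zset, G.u i h * G.omega β h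

/-- The profile obtained from `β` by replacing all of player `i`'s components by `b`. -/
def replace (β : G.Profile) (i : Fin G.n) (b : ℕ → ℕ → ℝ) : G.Profile :=
  fun p => if p = i then b else β p

/-- `β` is a Nash equilibrium in behavioral strategies. -/
def IsNash (β : G.Profile) : Prop :=
  G.IsBehProfile β ∧ ∀ (i : Fin G.n) (b : ℕ → ℕ → ℝ), G.IsBehStrategy i b →
    G.uExp i (G.replace β i b) ≤ G.uExp i β

/-- `(β, β̃, μ)` satisfies the Nash characterization (Definition 2 of the paper). -/
def NashChar (β βt : G.Profile) (μ : G.Belief) : Prop :=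
  (∀ (i : Fin G.n) (j : ℕ), j < G.m i → ∀ a' ∈ G.infoA i j, ∀ a'' ∈ G.infoA i j,
    G.uWedgeAct i j a' (G.rho i j β βt) < G.uWedgeAct i j a'' (G.rho i j β βt) →
    β i j a' = 0) ∧
  (∀ (i : Fin G.n) (j : ℕ), j < G.m i → ∀ a' ∈ G.infoA i j, ∀ a'' ∈ G.infoA i j,
    G.uCond i j a' (G.rho i j β βt) μ < G.uCond i j a'' (G.rho i j β βt) μ →
    βt i j a' = 0) ∧
  G.IsBelief μ ∧ G.SelfIndep β μ

/-- `r` is the root of a subgame: every information set lies entirely inside or entirely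
outside the set of histories extending `r`. -/
def IsSubgameRoot (r : List ℕ) : Prop :=
  r ∈ G.H ∧ ∀ (i : Fin G.n) (j : ℕ), j < G.m i →
    (∀ h ∈ G.Info i j, r <+: h) ∨ ∀ h ∈ G.Info i j, ¬ r <+: h

/-- The depth `g` of the smallest subgame containing `A(I_i^j)` (the length of the longest
subgame root preceding every history of `I_i^j`). -/
def sgDepthInfo (i : Fin G.n) (j : ℕ) : ℕ :=
  (G.H.filter fun r => G.IsSubgameRoot r ∧ ∀ h ∈ G.Info i j, r <+: h).sup List.length

/-- The depth `q(h)` of the smallest subgame containing the last action of `h`. -/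
def sgDepthHist (h : List ℕ) : ℕ :=
  (G.H.filter fun r => G.IsSubgameRoot r ∧ r <+: h.dropLast).sup List.length

/-- `C^i_{I_i^j}(h|β)`: product of move probabilities along `h` within the smallest subgame
containing `A(I_i^j)`. -/
def Ch (i : Fin G.n) (j : ℕ) (β : G.Profile) (h : List ℕ) : ℝ :=
  G.prodAlong β (h.take (G.sgDepthInfo i j)) (h.drop (G.sgDepthInfo i j))

/-- `C^i_{I_i^j}(I_i^j|β)`. -/
def CInfo (i : Fin G.n) (j : ℕ) (β : G.Profile) : ℝ := ∑ h ∈ G.Info i j, G.Ch i j β h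

/-- `u^i((a, β^{-I_i^j}) ⋄ I_i^j)`. -/
def uDiamondAct (i : Fin G.n) (j : ℕ) (a : ℕ) (β : G.Profile) : ℝ :=
  ∑ h ∈ G.Zset.filter (fun h => a ∈ h), G.u i h *
    G.prodAlongSkip i j β (h.take (G.sgDepthInfo i j)) (h.drop (G.sgDepthInfo i j))

/-- `Y^i(h|β)`: like `S^i(h|β)` but within the smallest subgame containing the last action
of `h`. -/
def Yh (i : Fin G.n) (β : G.Profile) (h : List ℕ) : ℝ :=
  G.prodAlongNot i β (h.take (G.sgDepthHist h)) (h.drop (G.sgDepthHist h))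

/-- `Y^i(I_i^j|β)`. -/
def YInfo (i : Fin G.n) (j : ℕ) (β : G.Profile) : ℝ := ∑ h ∈ G.Info i j, G.Yh i β h

/-- The belief condition `Y^i(I_i^j|β) · μ^i_{I_i^j}(h) = Y^i(h|β)`. -/
def YConsistent (β : G.Profile) (μ : G.Belief) : Prop :=
  ∀ (i : Fin G.n) (j : ℕ), j < G.m i → ∀ h ∈ G.Info i j,
    G.YInfo i j β * μ i j h = G.Yh i β h

/-- The expected payoff of player `i` in the subgame rooted at `r` (payoffs of terminal
histories extending `r`, weighted by the move probabilities within the subgame). -/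
def uExpFrom (i : Fin G.n) (β : G.Profile) (r : List ℕ) : ℝ :=
  ∑ h ∈ G.Zset.filter (fun h => r <+: h), G.u i h * G.prodAlong β r (h.drop r.length)

/-- `β` is a subgame perfect equilibrium in behavioral strategies: its restriction to every
subgame is a Nash equilibrium in behavioral strategies of that subgame. -/
def IsSubgamePerfect (β : G.Profile) : Prop :=
  G.IsBehProfile β ∧ ∀ r : List ℕ, G.IsSubgameRoot r →
    ∀ (i : Fin G.n) (b : ℕ → ℕ → ℝ), G.IsBehStrategy i b →
      G.uExpFrom i (G.replace β i b) r ≤ G.uExpFrom i β r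

/-- `(β, β̃, μ)` satisfies the subgame perfect characterization (Definition 6 of the
paper). -/
def SubgameChar (β βt : G.Profile) (μ : G.Belief) : Prop :=
  (∀ (i : Fin G.n) (j : ℕ), j < G.m i → ∀ a' ∈ G.infoA i j, ∀ a'' ∈ G.infoA i j,
    G.uDiamondAct i j a' (G.rho i j β βt) < G.uDiamondAct i j a'' (G.rho i j β βt) →
    β i j a' = 0) ∧
  (∀ (i : Fin G.n) (j : ℕ), j < G.m i → ∀ a' ∈ G.infoA i j, ∀ a'' ∈ G.infoA i j,
    G.uCond i j a' (G.rho i j β βt) μ < G.uCond i j a'' (G.rho i j β βt) μ →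
    βt i j a' = 0) ∧
  G.IsBelief μ ∧ G.YConsistent β μ

/-- `(β, μ)` is a semi-sequential equilibrium. -/
def SemiSeqEq (β : G.Profile) (μ : G.Belief) : Prop :=
  G.IsBehProfile β ∧ G.IsBelief μ ∧ G.SelfIndep β μ ∧
  ∀ (i : Fin G.n) (j : ℕ), j < G.m i → ∀ a' ∈ G.infoA i j, ∀ a'' ∈ G.infoA i j,
    G.uCond i j a' β μ < G.uCond i j a'' β μ → β i j a' = 0

/-- `(β, μ)` is a subgame perfect semi-sequential equilibrium. -/
def SubgameSemiSeqEq (β : G.Profile) (μ : G.Belief) : Prop :=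
  G.IsBehProfile β ∧ G.IsBelief μ ∧ G.YConsistent β μ ∧
  ∀ (i : Fin G.n) (j : ℕ), j < G.m i → ∀ a' ∈ G.infoA i j, ∀ a'' ∈ G.infoA i j,
    G.uCond i j a' β μ < G.uCond i j a'' β μ → β i j a' = 0

/-- `d(I_i^j)`: the number of information sets of player `i` containing a prefix of some
history of `I_i^j` (counting `I_i^j` itself). -/
def dInfo (i : Fin G.n) (j : ℕ) : ℕ :=
  ((Finset.range (G.m i)).filter
    (fun q => ∃ h ∈ G.Info i j, ∃ p : List ℕ, p <+: h ∧ p ∈ G.Info i q)).card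

end EFG

/-!
Choose `β̃` by backward induction, at each information set maximizing the conditional payoff given
the choices at the later ones. The identity behind the theorem is that the payoff change caused by
moving player `i` from `β` to `β̃` telescopes, over the information sets of `i`, into
`(probability that i's own moves under β allow the set to be reached) × (gain from letting β̃ rather
than β choose the action there, when i plays β̃ afterwards)`.
Each gain is nonnegative because `β̃` only uses maximizing actions, while the total is nonpositive
because `β` is a Nash equilibrium. Hence every term vanishes: where `i`'s own moves allow the
information set to be reached, `β` only uses maximizing actions too, and elsewhere the unconditional
payoffs of all actions are zero.
Self-independence of the beliefs makes the conditional payoff, scaled by `S^i(I_i^j|β)`, equal to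
the payoff appearing in the gain, and so links the two conditions of the characterization.
-/

/-- The weights `x` on `s` vanish off the maximizers of `f`: the best-response condition that
both halves of `EFG.NashChar` impose at an information set. -/
def SupportedOnArgmax {ι R : Type*} [Zero R] [LT R] (s : Finset ι) (x f : ι → R) : Prop :=
  ∀ a' ∈ s, ∀ a'' ∈ s, f a' < f a'' → x a' = 0

section Argmax

variable {ι R : Type*} [CommRing R] [LinearOrder R] [IsStrictOrderedRing R]
  {s : Finset ι} {x f g : ι → R} {c : R}

theorem sum_mul_le_of_forall_le (hx₀ : ∀ a ∈ s, 0 ≤ x a) (hx₁ : ∑ a ∈ s, x a = 1)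
    (hf : ∀ a ∈ s, f a ≤ c) : ∑ a ∈ s, x a * f a ≤ c :=
  calc ∑ a ∈ s, x a * f a
    _ ≤ ∑ a ∈ s, x a * c :=
        Finset.sum_le_sum fun a ha => mul_le_mul_of_nonneg_left (hf a ha) (hx₀ a ha)
    _ = c := by rw [← Finset.sum_mul, hx₁, one_mul]

theorem supportedOnArgmax_iff_forall_le_sum (hx₀ : ∀ a ∈ s, 0 ≤ x a)
    (hx₁ : ∑ a ∈ s, x a = 1) :
    SupportedOnArgmax s x f ↔ ∀ a ∈ s, f a ≤ ∑ a' ∈ s, x a' * f a' := by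
  refine ⟨fun h a ha => ?_, fun h a' ha' a'' ha'' hlt => ?_⟩
  · calc f a = ∑ a' ∈ s, x a' * f a := by rw [← Finset.sum_mul, hx₁, one_mul]
      _ ≤ ∑ a' ∈ s, x a' * f a' := Finset.sum_le_sum fun a' ha' => by
          rcases lt_or_ge (f a') (f a) with hlt | hle
          · simp only [h a' ha' a ha hlt, zero_mul, le_refl]
          · exact mul_le_mul_of_nonneg_left hle (hx₀ a' ha')
  · set v := ∑ a ∈ s, x a * f a
    have hsum : ∑ a ∈ s, x a * (v - f a) = 0 := by
      simp only [mul_sub, Finset.sum_sub_distrib, ← Finset.sum_mul, hx₁, one_mul, v, sub_self]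
    have hterm : x a' * (v - f a') = 0 :=
      (Finset.sum_eq_zero_iff_of_nonneg fun a ha =>
        mul_nonneg (hx₀ a ha) (sub_nonneg.2 (h a ha))).1 hsum a' ha'
    exact (mul_eq_zero.1 hterm).resolve_right (sub_pos.2 (hlt.trans_le (h a'' ha''))).ne'

theorem SupportedOnArgmax.of_eq_const_mul (hc : 0 ≤ c) (hg : ∀ a ∈ s, g a = c * f a)
    (h : c ≠ 0 → SupportedOnArgmax s x f) : SupportedOnArgmax s x g := by
  intro a' ha' a'' ha'' hlt
  rw [hg a' ha', hg a'' ha''] at hlt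
  refine h ?_ a' ha' a'' ha'' (lt_of_mul_lt_mul_left hlt hc)
  rintro rfl
  simp only [zero_mul, lt_self_iff_false] at hlt

theorem exists_supportedOnArgmax (hs : s.Nonempty) (f : ι → R) :
    ∃ x : ι → R, ((∀ a ∈ s, 0 ≤ x a) ∧ ∑ a ∈ s, x a = 1) ∧ SupportedOnArgmax s x f := by
  obtain ⟨m, hm, hmax⟩ := s.exists_max_image f hs
  have hsingle : 0 ≤ Pi.single (M := fun _ => R) m 1 := Pi.single_nonneg.2 zero_le_one
  refine ⟨Pi.single m 1, ⟨fun a _ => hsingle a, ?_⟩, fun a' _ a'' ha'' hlt => ?_⟩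
  · rw [Finset.sum_pi_single', if_pos hm]
  · refine Pi.single_eq_of_ne ?_ _
    rintro rfl
    exact hlt.not_ge (hmax a'' ha'')

end Argmax

theorem exists_sum_mul_eq {ι K : Type*} [Field K] [LinearOrder K] [IsStrictOrderedRing K]
    {s : Finset ι} {w : ι → K} (hs : s.Nonempty) (hw : ∀ a ∈ s, 0 ≤ w a) :
    ∃ x : ι → K, ((∀ a ∈ s, 0 ≤ x a) ∧ ∑ a ∈ s, x a = 1) ∧
      ∀ a ∈ s, (∑ a' ∈ s, w a') * x a = w a := by
  rcases eq_or_ne (∑ a ∈ s, w a) 0 with h0 | hne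
  · have hcard : (s.card : K) ≠ 0 := Nat.cast_ne_zero.2 hs.card_ne_zero
    refine ⟨fun _ => (s.card : K)⁻¹, ⟨fun _ _ => by positivity, ?_⟩, fun a ha => ?_⟩
    · rw [Finset.sum_const, nsmul_eq_mul, mul_inv_cancel₀ hcard]
    · rw [h0, zero_mul, (Finset.sum_eq_zero_iff_of_nonneg hw).1 h0 a ha]
  · refine ⟨fun a => w a / ∑ a' ∈ s, w a', ⟨fun a ha => ?_, ?_⟩, fun a _ => ?_⟩
    · exact div_nonneg (hw a ha) (Finset.sum_nonneg hw)
    · rw [← Finset.sum_div, div_self hne]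
    · exact mul_div_cancel₀ _ hne

theorem exists_forall_of_wellFounded {ι : Type*} {α : ι → Type*} [∀ i, Nonempty (α i)]
    {r : ι → ι → Prop} (hr : WellFounded r) {Q : ∀ i, (∀ k, α k) → α i → Prop}
    (hexists : ∀ i f, ∃ x, Q i f x)
    (hcongr : ∀ i f g x, (∀ k, r k i → f k = g k) → Q i f x → Q i g x) :
    ∃ f : ∀ i, α i, ∀ i, Q i f (f i) := by
  choose next hnext using hexists
  let below (i : ι) (rec : ∀ k, r k i → α k) : ∀ k, α k :=
    fun k => if h : r k i then rec k h else Classical.arbitrary (α k)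
  let f := hr.fix fun i rec => next i (below i rec)
  have hf : ∀ i, f i = next i (below i fun k _ => f k) := fun i => hr.fix_eq _ i
  refine ⟨f, fun i => hcongr i (below i fun k _ => f k) f _ (fun k hk => dif_pos hk) ?_⟩
  rw [hf]
  exact hnext i _

theorem exists_concat_prefix_of_mem {α : Type*} {x : α} {l : List α} (hx : x ∈ l) :
    ∃ s, s ++ [x] <+: l := by
  obtain ⟨s, t, rfl⟩ := List.append_of_mem hx
  exact ⟨s, t, by simp⟩

section RealizationWeight

variable {ι κ R : Type*}

/-- The realization weight of a sequence of (information set, action) pairs under a behavioral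
strategy `b`: the probability that `b` takes these actions at these information sets. -/
def realizationWeight [Monoid R] (b : ι → κ → R) (l : List (ι × κ)) : R :=
  (l.map fun x => b x.1 x.2).prod

/-- The realization weight under `b` of what remains of the sequence `r` after its initial
segment `p`, and `0` if `r` does not start with `p`. -/
def continuationWeight [MonoidWithZero R] (b : ι → κ → R) (p r : List (ι × κ)) : R :=
  if p <+: r then realizationWeight b (r.drop p.length) else 0

section Monoid

variable [Monoid R] {b c : ι → κ → R}

@[simp]
theorem realizationWeight_nil : realizationWeight b [] = 1 := rfl

@[simp]
theorem realizationWeight_cons (x : ι × κ) (l : List (ι × κ)) :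
    realizationWeight b (x :: l) = b x.1 x.2 * realizationWeight b l :=
  List.prod_cons

@[simp]
theorem realizationWeight_append (l t : List (ι × κ)) :
    realizationWeight b (l ++ t) = realizationWeight b l * realizationWeight b t := by
  simp only [realizationWeight, List.map_append, List.prod_append]

theorem realizationWeight_congr {l : List (ι × κ)} (h : ∀ x ∈ l, b x.1 x.2 = c x.1 x.2) :
    realizationWeight b l = realizationWeight c l :=
  congrArg List.prod (List.map_congr_left h)

end Monoid

@[simp]
theorem continuationWeight_append [MonoidWithZero R] (b : ι → κ → R) (p t : List (ι × κ)) :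
    continuationWeight b p (p ++ t) = realizationWeight b t := by
  rw [continuationWeight, if_pos (List.prefix_append p t), List.drop_left]

theorem continuationWeight_concat [Semiring R] (b : ι → κ → R) (p r : List (ι × κ))
    (x : ι × κ) :
    continuationWeight b p (r ++ [x]) =
      (if p = r ++ [x] then 1 else 0) + continuationWeight b p r * b x.1 x.2 := by
  by_cases hpx : p = r ++ [x]
  · have hlong : ¬ r ++ [x] <+: r := fun h => by simpa using h.length_le
    simp [hpx, continuationWeight, hlong]
  by_cases hpr : p <+: r
  · obtain ⟨t, rfl⟩ := hpr
    rw [if_neg hpx, List.append_assoc]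
    simp
  · simp [continuationWeight, List.prefix_concat_iff, hpx, hpr]

theorem realizationWeight_sub_realizationWeight [CommRing R] {I : Finset ι} {A : ι → Finset κ}
    {σ : ι → List (ι × κ)} (b c : ι → κ → R) (r : List (ι × κ))
    (hr : ∀ l q a, l ++ [(q, a)] <+: r → q ∈ I ∧ a ∈ A q ∧ σ q = l) :
    realizationWeight c r - realizationWeight b r =
      ∑ q ∈ I, realizationWeight b (σ q) *
        ∑ a ∈ A q, (c q a - b q a) * continuationWeight c (σ q ++ [(q, a)]) r := by
  induction r using List.reverseRecOn with
  | nil => simp [continuationWeight]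
  | append_singleton l x ih =>
    obtain ⟨hI, hA, hσ⟩ := hr l x.1 x.2 (List.prefix_refl _)
    have hlast : ∑ q ∈ I, realizationWeight b (σ q) * ∑ a ∈ A q, (c q a - b q a) *
        (if σ q ++ [(q, a)] = l ++ [x] then 1 else 0) =
        realizationWeight b l * (c x.1 x.2 - b x.1 x.2) := by
      rw [Finset.sum_eq_single_of_mem x.1 hI, Finset.sum_eq_single_of_mem x.2 hA]
      · simp [hσ]
      · intro a _ ha
        simp [Prod.ext_iff, ha]
      · intro q _ hq
        simp [Prod.ext_iff, hq]
    have hinit := ih fun l' q a h => hr l' q a (h.trans (List.prefix_append l [x]))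
    simp only [continuationWeight_concat, mul_add, Finset.sum_add_distrib, hlast,
      ← mul_assoc, ← Finset.sum_mul, ← hinit, realizationWeight_append, realizationWeight_cons,
      realizationWeight_nil]
    ring

end RealizationWeight

namespace EFG

variable {G : EFG} {i : Fin G.n} {j q : ℕ} {β γ : G.Profile}

theorem mem_H_of_mem_Zset {z : List ℕ} (hz : z ∈ G.Zset) : z ∈ G.H := (Finset.mem_filter.1 hz).1

theorem mem_Info_iff (hj : j < G.m i) {h : List ℕ} {a : ℕ} (ha : h ++ [a] ∈ G.H) :
    h ∈ G.Info i j ↔ G.P h = some i ∧ G.infoIdx h = j := by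
  rw [G.info_spec i j h hj]
  exact ⟨fun ⟨_, hP, _, hidx⟩ => ⟨hP, hidx⟩, fun ⟨hP, hidx⟩ =>
    ⟨G.prefixClosed _ ha _ (List.prefix_append h [a]), hP, ⟨a, ha⟩, hidx⟩⟩

theorem infoIdx_lt_of_concat_mem {h : List ℕ} {a : ℕ} (ha : h ++ [a] ∈ G.H)
    (hP : G.P h = some i) : G.infoIdx h < G.m i :=
  G.infoIdx_lt i h (G.prefixClosed _ ha _ (List.prefix_append h [a])) hP ⟨a, ha⟩

theorem mem_infoA_iff {a : ℕ} :
    a ∈ G.infoA i j ↔ ∃ h ∈ G.Info i j, h ++ [a] ∈ G.H := by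
  simp only [infoA, A, Finset.mem_sup, Finset.mem_filter]
  exact ⟨fun ⟨h, hh, _, ha⟩ => ⟨h, hh, ha⟩, fun ⟨h, hh, ha⟩ => ⟨h, hh, G.act_mem h a ha, ha⟩⟩

theorem infoA_nonempty (hj : j < G.m i) : (G.infoA i j).Nonempty := by
  obtain ⟨h, hh⟩ := G.info_nonempty i j hj
  obtain ⟨_, _, ⟨a, ha⟩, _⟩ := (G.info_spec i j h hj).1 hh
  exact ⟨a, mem_infoA_iff.2 ⟨h, hh, ha⟩⟩

theorem exists_eq_append_of_mem_infoA (hj : j < G.m i) {a : ℕ} (ha : a ∈ G.infoA i j)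
    {z : List ℕ} (hz : z ∈ G.H) (haz : a ∈ z) : ∃ h t, z = h ++ a :: t ∧ h ∈ G.Info i j := by
  obtain ⟨h, t, rfl⟩ := List.append_of_mem haz
  obtain ⟨h', hh', ha'⟩ := mem_infoA_iff.1 ha
  have hha : h ++ [a] ∈ G.H := G.prefixClosed _ hz _ ⟨t, by simp⟩
  obtain ⟨hP', hidx'⟩ := (mem_Info_iff hj ha').1 hh'
  obtain ⟨hP, hidx⟩ := G.act_unique h h' a (G.prefixClosed _ hha _ (List.prefix_append _ _))
    (G.prefixClosed _ ha' _ (List.prefix_append _ _)) hha ha'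
  exact ⟨h, t, rfl, (mem_Info_iff hj hha).2 ⟨hP.trans hP', hidx.trans hidx'⟩⟩

theorem prodAlongNot_append (i : Fin G.n) (β : G.Profile) (pre s t : List ℕ) :
    G.prodAlongNot i β pre (s ++ t) =
      G.prodAlongNot i β pre s * G.prodAlongNot i β (pre ++ s) t := by
  induction s generalizing pre with
  | nil => simp [prodAlongNot]
  | cons b s ih => simp [prodAlongNot, ih, mul_assoc]

theorem recordFrom_append (i : Fin G.n) (pre s t : List ℕ) :
    G.recordFrom i pre (s ++ t) = G.recordFrom i pre s ++ G.recordFrom i (pre ++ s) t := by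
  induction s generalizing pre with
  | nil => simp [recordFrom]
  | cons b s ih => simp [recordFrom, ih]

theorem prodAlong_eq_prodAlongNot_mul (i : Fin G.n) (β : G.Profile) (pre rest : List ℕ) :
    G.prodAlong β pre rest =
      G.prodAlongNot i β pre rest * realizationWeight (β i) (G.recordFrom i pre rest) := by
  induction rest generalizing pre with
  | nil => simp [prodAlong, prodAlongNot, recordFrom]
  | cons b rest ih =>
    rw [prodAlong, prodAlongNot, recordFrom, ih, realizationWeight_append]
    by_cases hP : G.P pre = some i
    · simp only [hP, moveProb, Option.elim_some, if_true, realizationWeight_cons,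
        realizationWeight_nil]
      ring
    · simp only [hP, if_false, realizationWeight_nil]
      ring

theorem prodAlongNot_congr (h : ∀ p ≠ i, β p = γ p) (pre rest : List ℕ) :
    G.prodAlongNot i β pre rest = G.prodAlongNot i γ pre rest := by
  induction rest generalizing pre with
  | nil => rfl
  | cons b rest ih =>
    rw [prodAlongNot, prodAlongNot, ih]
    split_ifs with hP
    · rfl
    · unfold moveProb
      rcases hp : G.P pre with _ | p
      · rfl
      · simp only [Option.elim_some, h p fun hpi => hP (hpi ▸ hp)]

theorem moveProb_nonneg (hβ : G.IsBehProfile β) {h : List ℕ} {a : ℕ} (ha : h ++ [a] ∈ G.H) :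
    0 ≤ G.moveProb β h a := by
  unfold moveProb
  rcases hP : G.P h with _ | i
  · exact G.fc_nonneg h a
  · have hlt := infoIdx_lt_of_concat_mem ha hP
    exact (hβ i _ hlt).1 a (mem_infoA_iff.2 ⟨h, (mem_Info_iff hlt ha).2 ⟨hP, rfl⟩, ha⟩)

theorem prodAlongNot_nonneg (hβ : G.IsBehProfile β) (i : Fin G.n) {pre rest : List ℕ}
    (hh : pre ++ rest ∈ G.H) : 0 ≤ G.prodAlongNot i β pre rest := by
  induction rest generalizing pre with
  | nil => exact zero_le_one
  | cons b rest ih =>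
    refine mul_nonneg ?_ (ih (by simpa using hh))
    split_ifs
    · exact zero_le_one
    · exact moveProb_nonneg hβ (G.prefixClosed _ hh _ ⟨rest, by simp⟩)

theorem Sh_nonneg (hβ : G.IsBehProfile β) (hj : j < G.m i) {h : List ℕ}
    (hh : h ∈ G.Info i j) : 0 ≤ G.Sh i β h :=
  prodAlongNot_nonneg hβ i ((G.info_spec i j h hj).1 hh).1

theorem prodAlongSkip_eq_prodAlong (hj : j < G.m i) (γ : G.Profile) {pre rest : List ℕ}
    (hh : pre ++ rest ∈ G.H) :
    G.prodAlongSkip i j γ pre rest =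
      G.prodAlong (Function.update γ i (Function.update (γ i) j 1)) pre rest := by
  induction rest generalizing pre with
  | nil => rfl
  | cons b rest ih =>
    have hb : pre ++ [b] ∈ G.H := G.prefixClosed _ hh _ ⟨rest, by simp⟩
    simp only [prodAlongSkip, prodAlong, ih (by simpa using hh : (pre ++ [b]) ++ rest ∈ G.H),
      mem_Info_iff hj hb, moveProb]
    congr 1
    rcases G.P pre with _ | p
    · simp
    · rcases eq_or_ne p i with rfl | hp
      · by_cases hidx : G.infoIdx pre = j <;> simp [hidx]
      · simp [hp]

theorem nuAux_append_cons (i : Fin G.n) (j : ℕ) (γ : G.Profile) (w : List ℕ → ℝ) (pre h t : List ℕ)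
    (a : ℕ) (hfirst : ∀ s b, s ++ [b] <+: h → pre ++ s ∉ G.Info i j)
    (hh : pre ++ h ∈ G.Info i j) :
    G.nuAux i j γ w pre (h ++ a :: t) = w (pre ++ h) * G.prodAlong γ (pre ++ h ++ [a]) t := by
  induction h generalizing pre with
  | nil =>
    rw [List.append_nil] at hh ⊢
    exact if_pos hh
  | cons b h ih =>
    have hpre : pre ∉ G.Info i j := by simpa using hfirst [] b (by simp)
    rw [List.cons_append, nuAux, if_neg hpre, ih (pre ++ [b])]
    · simp
    · intro s c hs
      simpa using hfirst (b :: s) c (by simpa using hs)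
    · simpa using hh

theorem exists_of_concat_prefix_recordFrom {pre rest : List ℕ} (hh : pre ++ rest ∈ G.H)
    {l : List (ℕ × ℕ)} {a : ℕ} (hl : l ++ [(q, a)] <+: G.recordFrom i pre rest) :
    ∃ s, s ++ [a] <+: rest ∧ q < G.m i ∧ pre ++ s ∈ G.Info i q ∧ G.recordFrom i pre s = l := by
  induction rest using List.reverseRecOn with
  | nil => simp [recordFrom] at hl
  | append_singleton rest b ih =>
    rw [← List.append_assoc] at hh
    have hinit (hl : l ++ [(q, a)] <+: G.recordFrom i pre rest) :
        ∃ s, s ++ [a] <+: rest ++ [b] ∧ q < G.m i ∧ pre ++ s ∈ G.Info i q ∧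
          G.recordFrom i pre s = l := by
      obtain ⟨s, hs, hspec⟩ := ih (G.prefixClosed _ hh _ (List.prefix_append _ _)) hl
      exact ⟨s, hs.trans (List.prefix_append rest [b]), hspec⟩
    by_cases hP : G.P (pre ++ rest) = some i
    · rw [recordFrom_append, recordFrom, if_pos hP, recordFrom, List.append_nil,
        List.prefix_concat_iff] at hl
      refine hl.elim (fun heq => ?_) hinit
      simp only [List.append_singleton_inj, Prod.mk.injEq] at heq
      obtain ⟨rfl, rfl, rfl⟩ := heq
      have hlt := infoIdx_lt_of_concat_mem hh hP
      exact ⟨rest, List.prefix_refl _, hlt, (mem_Info_iff hlt hh).2 ⟨hP, rfl⟩, rfl⟩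
    · rw [recordFrom_append, recordFrom, if_neg hP, recordFrom, List.append_nil,
        List.append_nil] at hl
      exact hinit hl

/-- `I_i^q` can be reached after an action of `A(I_i^j)`: the condition under which
`ϱ^i_{I_i^j}` replaces the component at `I_i^q`. -/
def Follows (i : Fin G.n) (q j : ℕ) : Prop := ∃ h ∈ G.Info i q, ∃ b ∈ h, b ∈ G.infoA i j

theorem rho_apply_of_follows (β γ : G.Profile) (h : Follows i q j) :
    G.rho i j β γ i q = γ i q :=
  if_pos ⟨rfl, h⟩

theorem rho_apply_of_not_follows (β γ : G.Profile) (h : ¬ Follows i q j) :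
    G.rho i j β γ i q = β i q :=
  if_neg fun h' => h h'.2

theorem rho_apply_of_ne (β γ : G.Profile) (j : ℕ) {p : Fin G.n} (hp : p ≠ i) :
    G.rho i j β γ p = β p :=
  funext fun _ => if_neg fun h => hp h.1

theorem follows_of_mem_recordFrom {pre rest : List ℕ} (hh : pre ++ rest ∈ G.H) {a : ℕ}
    (ha : a ∈ G.infoA i j) (hpre : a ∈ pre) {x : ℕ × ℕ} (hx : x ∈ G.recordFrom i pre rest) :
    Follows i x.1 j := by
  obtain ⟨l, hl⟩ := exists_concat_prefix_of_mem hx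
  obtain ⟨s, _, _, hs, _⟩ := exists_of_concat_prefix_recordFrom hh hl
  exact ⟨pre ++ s, hs, a, List.mem_append_left s hpre, ha⟩

variable (G) in
/-- The record `X_i(h)` common to all histories `h` of `I_i^j`, read off from an arbitrary
history of `I_i^j`; it is `[]` when `I_i^j` is empty. -/
def infoRecord (i : Fin G.n) (j : ℕ) : List (ℕ × ℕ) :=
  if h : (G.Info i j).Nonempty then G.recordFrom i [] h.choose else []

namespace PerfectRecall

theorem recordFrom_eq_infoRecord (hPR : G.PerfectRecall) (hj : j < G.m i) {h : List ℕ}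
    (hh : h ∈ G.Info i j) : G.recordFrom i [] h = G.infoRecord i j := by
  have hne : (G.Info i j).Nonempty := ⟨h, hh⟩
  rw [infoRecord, dif_pos hne]
  exact hPR i j hj h hh _ hne.choose_spec

theorem infoRecord_eq_of_concat_prefix (hPR : G.PerfectRecall) {z : List ℕ} (hz : z ∈ G.H)
    {l : List (ℕ × ℕ)} {a : ℕ} (hl : l ++ [(q, a)] <+: G.recordFrom i [] z) :
    q < G.m i ∧ a ∈ G.infoA i q ∧ G.infoRecord i q = l := by
  obtain ⟨s, hs, hq, hmem, rfl⟩ := exists_of_concat_prefix_recordFrom hz hl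
  exact ⟨hq, mem_infoA_iff.2 ⟨s, hmem, G.prefixClosed _ hz _ hs⟩,
    (hPR.recordFrom_eq_infoRecord hq hmem).symm⟩

theorem infoRecord_spec_of_mem (hPR : G.PerfectRecall) (hj : j < G.m i) {x : ℕ × ℕ}
    (hx : x ∈ G.infoRecord i j) : x.1 < G.m i ∧ x.2 ∈ G.infoA i x.1 ∧
      (G.infoRecord i x.1).length < (G.infoRecord i j).length := by
  obtain ⟨h, hh⟩ := G.info_nonempty i j hj
  obtain ⟨l, hl⟩ := exists_concat_prefix_of_mem hx
  obtain ⟨hlt, hmem, rfl⟩ := hPR.infoRecord_eq_of_concat_prefix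
    ((G.info_spec i j h hj).1 hh).1 (hPR.recordFrom_eq_infoRecord hj hh ▸ hl)
  exact ⟨hlt, hmem, by simpa using hl.length_le⟩

theorem recordFrom_append_cons (hPR : G.PerfectRecall) (hj : j < G.m i) {h : List ℕ}
    (hh : h ∈ G.Info i j) (a : ℕ) (t : List ℕ) :
    G.recordFrom i [] (h ++ a :: t) =
      G.infoRecord i j ++ (j, a) :: G.recordFrom i (h ++ [a]) t := by
  obtain ⟨_, hP, _, hidx⟩ := (G.info_spec i j h hj).1 hh
  rw [recordFrom_append, hPR.recordFrom_eq_infoRecord hj hh, List.nil_append, recordFrom, if_pos hP,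
    hidx, List.singleton_append]

theorem length_infoRecord_lt_of_follows (hPR : G.PerfectRecall) (hj : j < G.m i)
    (hq : q < G.m i) (hqj : Follows i q j) :
    (G.infoRecord i j).length < (G.infoRecord i q).length := by
  obtain ⟨h, hh, a, hah, ha⟩ := hqj
  obtain ⟨h', t, rfl, hh'⟩ :=
    exists_eq_append_of_mem_infoA hj ha ((G.info_spec i q h hq).1 hh).1 hah
  rw [← hPR.recordFrom_eq_infoRecord hq hh, hPR.recordFrom_append_cons hj hh', List.length_append,
    List.length_cons]
  omega

theorem not_follows_self (hPR : G.PerfectRecall) (hj : j < G.m i) : ¬ Follows i j j :=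
  fun h => (hPR.length_infoRecord_lt_of_follows hj hj h).false

theorem not_follows_of_mem_infoRecord (hPR : G.PerfectRecall) (hj : j < G.m i) {x : ℕ × ℕ}
    (hx : x ∈ G.infoRecord i j) : ¬ Follows i x.1 j := fun h =>
  have ⟨hlt, _, hlen⟩ := hPR.infoRecord_spec_of_mem hj hx
  hlen.asymm (hPR.length_infoRecord_lt_of_follows hj hlt h)

theorem notMem_Info_of_concat_prefix (hPR : G.PerfectRecall) (hj : j < G.m i) {h : List ℕ}
    (hh : h ∈ G.Info i j) {s : List ℕ} {b : ℕ} (hs : s ++ [b] <+: h) : s ∉ G.Info i j := by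
  obtain ⟨t, rfl⟩ := hs
  intro hmem
  have hrec := hPR.recordFrom_append_cons hj hmem b t
  rw [List.append_cons s b t, hPR.recordFrom_eq_infoRecord hj hh] at hrec
  simpa using congrArg List.length hrec

theorem realizationWeight_infoRecord_nonneg (hPR : G.PerfectRecall) (hβ : G.IsBehProfile β)
    (hj : j < G.m i) : 0 ≤ realizationWeight (β i) (G.infoRecord i j) := by
  refine List.prod_nonneg fun y hy => ?_
  obtain ⟨x, hx, rfl⟩ := List.mem_map.1 hy
  obtain ⟨hlt, hmem, _⟩ := hPR.infoRecord_spec_of_mem hj hx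
  exact (hβ i x.1 hlt).1 x.2 hmem

end PerfectRecall

/-- Player `i`'s expected payoff from the terminal histories through `a ∈ A(I_i^j)`, where every
other player follows `β`, player `i` follows `b` after `a`, and the moves of player `i` up to and
including `a` are disregarded. -/
def contValue (i : Fin G.n) (β : G.Profile) (b : ℕ → ℕ → ℝ) (j a : ℕ) : ℝ :=
  ∑ z ∈ G.Zset, G.u i z * (G.Sh i β z *
    continuationWeight b (G.infoRecord i j ++ [(j, a)]) (G.recordFrom i [] z))

theorem contValue_eq_sum_filter (i : Fin G.n) (β : G.Profile) (b : ℕ → ℕ → ℝ) (j a : ℕ) :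
    contValue i β b j a = ∑ z ∈ G.Zset.filter (fun z => a ∈ z), G.u i z * (G.Sh i β z *
      continuationWeight b (G.infoRecord i j ++ [(j, a)]) (G.recordFrom i [] z)) := by
  refine (Finset.sum_filter_of_ne fun z hz hne => ?_).symm
  have hpre : G.infoRecord i j ++ [(j, a)] <+: G.recordFrom i [] z := by
    by_contra hpre
    simp [continuationWeight, hpre] at hne
  obtain ⟨s, hs, _⟩ :=
    exists_of_concat_prefix_recordFrom (pre := []) (mem_H_of_mem_Zset hz) hpre
  exact hs.mem (by simp)

theorem Sh_append_cons (hj : j < G.m i) (β : G.Profile) {h : List ℕ} (hh : h ∈ G.Info i j)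
    (a : ℕ) (t : List ℕ) :
    G.Sh i β (h ++ a :: t) = G.Sh i β h * G.prodAlongNot i β (h ++ [a]) t := by
  rw [Sh, prodAlongNot_append, List.nil_append, prodAlongNot,
    if_pos ((G.info_spec i j h hj).1 hh).2.1, one_mul, Sh]

theorem realizationWeight_rho_recordFrom (β γ : G.Profile) {pre rest : List ℕ}
    (hh : pre ++ rest ∈ G.H) {a : ℕ} (ha : a ∈ G.infoA i j) (hpre : a ∈ pre) :
    realizationWeight (G.rho i j β γ i) (G.recordFrom i pre rest) =
      realizationWeight (γ i) (G.recordFrom i pre rest) :=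
  realizationWeight_congr fun x hx => by
    rw [rho_apply_of_follows β γ (follows_of_mem_recordFrom hh ha hpre hx)]

namespace PerfectRecall

theorem continuationWeight_recordFrom (hPR : G.PerfectRecall) (hj : j < G.m i) {h : List ℕ}
    (hh : h ∈ G.Info i j) (b : ℕ → ℕ → ℝ) (a : ℕ) (t : List ℕ) :
    continuationWeight b (G.infoRecord i j ++ [(j, a)]) (G.recordFrom i [] (h ++ a :: t)) =
      realizationWeight b (G.recordFrom i (h ++ [a]) t) := by
  rw [hPR.recordFrom_append_cons hj hh,
    List.append_cons (G.infoRecord i j) (j, a) (G.recordFrom i _ t), continuationWeight_append]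

theorem prodAlongSkip_rho (hPR : G.PerfectRecall) (hj : j < G.m i) {h : List ℕ}
    (hh : h ∈ G.Info i j) {a : ℕ} (ha : a ∈ G.infoA i j) {t : List ℕ} (hz : h ++ a :: t ∈ G.H)
    (β γ : G.Profile) :
    G.prodAlongSkip i j (G.rho i j β γ) [] (h ++ a :: t) =
      realizationWeight (β i) (G.infoRecord i j) * (G.Sh i β (h ++ a :: t) *
        realizationWeight (γ i) (G.recordFrom i (h ++ [a]) t)) := by
  set b := Function.update (G.rho i j β γ i) j 1 with hb
  have hothers : ∀ p ≠ i, Function.update (G.rho i j β γ) i b p = β p := fun p hp => by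
    rw [Function.update_of_ne hp, rho_apply_of_ne β γ j hp]
  have hbefore : realizationWeight b (G.infoRecord i j) =
      realizationWeight (β i) (G.infoRecord i j) := realizationWeight_congr fun x hx => by
    have hne : x.1 ≠ j := fun h => (hPR.infoRecord_spec_of_mem hj hx).2.2.ne (by rw [h])
    rw [hb, Function.update_of_ne hne,
      rho_apply_of_not_follows β γ (hPR.not_follows_of_mem_infoRecord hj hx)]
  have hafter : realizationWeight b (G.recordFrom i (h ++ [a]) t) =
      realizationWeight (γ i) (G.recordFrom i (h ++ [a]) t) :=
    realizationWeight_congr fun x hx => by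
      have hfol := follows_of_mem_recordFrom (by simpa using hz) ha (by simp) hx
      have hne : x.1 ≠ j := fun h => hPR.not_follows_self hj (h ▸ hfol)
      rw [hb, Function.update_of_ne hne, rho_apply_of_follows β γ hfol]
  rw [prodAlongSkip_eq_prodAlong (pre := []) (rest := h ++ a :: t) hj _ hz,
    prodAlong_eq_prodAlongNot_mul i, prodAlongNot_congr hothers, Function.update_self,
    hPR.recordFrom_append_cons hj hh, realizationWeight_append, realizationWeight_cons, hbefore,
    hafter, Function.update_self, Pi.one_apply, one_mul, Sh]
  ring

theorem SInfo_mul_nu_rho (hPR : G.PerfectRecall) {μ : G.Belief} (hμ : G.SelfIndep β μ)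
    (hj : j < G.m i) {h : List ℕ} (hh : h ∈ G.Info i j) {a : ℕ} (ha : a ∈ G.infoA i j)
    {t : List ℕ} (hz : h ++ a :: t ∈ G.H) (γ : G.Profile) :
    G.SInfo i j β * G.nu i j (G.rho i j β γ) μ (h ++ a :: t) = G.Sh i β (h ++ a :: t) *
      realizationWeight (γ i) (G.recordFrom i (h ++ [a]) t) := by
  have hnu : G.nu i j (G.rho i j β γ) μ (h ++ a :: t) =
      μ i j h * G.prodAlong (G.rho i j β γ) (h ++ [a]) t :=
    nuAux_append_cons i j _ _ [] h t a
      (fun _ _ hs => hPR.notMem_Info_of_concat_prefix hj hh hs) hh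
  rw [hnu, prodAlong_eq_prodAlongNot_mul i, prodAlongNot_congr fun p => rho_apply_of_ne β γ j,
    realizationWeight_rho_recordFrom β γ (by simpa using hz) ha (by simp), ← mul_assoc,
    hμ i j hj h hh, Sh_append_cons hj β hh, mul_assoc]

theorem uWedgeAct_rho (hPR : G.PerfectRecall) (hj : j < G.m i) {a : ℕ} (ha : a ∈ G.infoA i j)
    (β γ : G.Profile) :
    G.uWedgeAct i j a (G.rho i j β γ) =
      realizationWeight (β i) (G.infoRecord i j) * contValue i β (γ i) j a := by
  rw [contValue_eq_sum_filter, uWedgeAct, Finset.mul_sum]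
  refine Finset.sum_congr rfl fun z hz => ?_
  obtain ⟨hz, haz⟩ := Finset.mem_filter.1 hz
  obtain ⟨h, t, rfl, hh⟩ := exists_eq_append_of_mem_infoA hj ha (mem_H_of_mem_Zset hz) haz
  rw [hPR.prodAlongSkip_rho hj hh ha (mem_H_of_mem_Zset hz),
    hPR.continuationWeight_recordFrom hj hh, mul_left_comm]

theorem SInfo_mul_uCond_rho (hPR : G.PerfectRecall) {μ : G.Belief} (hμ : G.SelfIndep β μ)
    (hj : j < G.m i) {a : ℕ} (ha : a ∈ G.infoA i j) (γ : G.Profile) :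
    G.SInfo i j β * G.uCond i j a (G.rho i j β γ) μ = contValue i β (γ i) j a := by
  rw [contValue_eq_sum_filter, uCond, Finset.mul_sum]
  refine Finset.sum_congr rfl fun z hz => ?_
  obtain ⟨hz, haz⟩ := Finset.mem_filter.1 hz
  obtain ⟨h, t, rfl, hh⟩ := exists_eq_append_of_mem_infoA hj ha (mem_H_of_mem_Zset hz) haz
  rw [mul_left_comm, hPR.SInfo_mul_nu_rho hμ hj hh ha (mem_H_of_mem_Zset hz),
    hPR.continuationWeight_recordFrom hj hh]

end PerfectRecall

theorem uExp_eq_sum_realizationWeight (h : ∀ p ≠ i, γ p = β p) :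
    G.uExp i γ =
      ∑ z ∈ G.Zset, G.u i z * (G.Sh i β z * realizationWeight (γ i) (G.recordFrom i [] z)) := by
  simp only [uExp, omega, prodAlong_eq_prodAlongNot_mul i γ, prodAlongNot_congr h, Sh]

theorem PerfectRecall.uExp_replace_sub_uExp (hPR : G.PerfectRecall) (i : Fin G.n)
    (β : G.Profile) (c : ℕ → ℕ → ℝ) :
    G.uExp i (G.replace β i c) - G.uExp i β =
      ∑ q ∈ Finset.range (G.m i), realizationWeight (β i) (G.infoRecord i q) *
        ∑ a ∈ G.infoA i q, (c q a - β i q a) * contValue i β c q a := by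
  have hterm : ∀ z ∈ G.Zset,
      G.u i z * (G.Sh i β z * realizationWeight c (G.recordFrom i [] z)) -
        G.u i z * (G.Sh i β z * realizationWeight (β i) (G.recordFrom i [] z)) =
      ∑ q ∈ Finset.range (G.m i), realizationWeight (β i) (G.infoRecord i q) *
        ∑ a ∈ G.infoA i q, (c q a - β i q a) * (G.u i z * (G.Sh i β z *
          continuationWeight c (G.infoRecord i q ++ [(q, a)]) (G.recordFrom i [] z))) := by
    intro z hz
    rw [← mul_sub, ← mul_sub, realizationWeight_sub_realizationWeight (A := G.infoA i) (β i) c _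
      fun l q a hl => (hPR.infoRecord_eq_of_concat_prefix (mem_H_of_mem_Zset hz) hl).imp_left
        Finset.mem_range.2]
    simp only [Finset.mul_sum]
    refine Finset.sum_congr rfl fun q _ => Finset.sum_congr rfl fun a _ => ?_
    ring
  have hreplace : G.replace β i c i = c := if_pos rfl
  rw [uExp_eq_sum_realizationWeight (γ := G.replace β i c) (β := β) fun p hp => if_neg hp,
    uExp_eq_sum_realizationWeight (γ := β) (β := β) fun _ _ => rfl, ← Finset.sum_sub_distrib,
    hreplace, Finset.sum_congr rfl hterm, Finset.sum_comm]
  simp only [contValue, Finset.mul_sum]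
  exact Finset.sum_congr rfl fun q _ => Finset.sum_comm

theorem IsNash.supportedOnArgmax_contValue (hβ : G.IsNash β) (hPR : G.PerfectRecall)
    {c : ℕ → ℕ → ℝ} (hc : G.IsBehStrategy i c)
    (hopt : ∀ q < G.m i, SupportedOnArgmax (G.infoA i q) (c q) (contValue i β c q))
    (hj : j < G.m i) (hreach : realizationWeight (β i) (G.infoRecord i j) ≠ 0) :
    SupportedOnArgmax (G.infoA i j) (β i j) (contValue i β c j) := by
  have hmax : ∀ q < G.m i, ∀ a ∈ G.infoA i q,
      contValue i β c q a ≤ ∑ a' ∈ G.infoA i q, c q a' * contValue i β c q a' := fun q hq =>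
    (supportedOnArgmax_iff_forall_le_sum (hc q hq).1 (hc q hq).2).1 (hopt q hq)
  have hgain : ∀ q ∈ Finset.range (G.m i), 0 ≤ realizationWeight (β i) (G.infoRecord i q) *
      ∑ a ∈ G.infoA i q, (c q a - β i q a) * contValue i β c q a := by
    intro q hq
    rw [Finset.mem_range] at hq
    refine mul_nonneg (hPR.realizationWeight_infoRecord_nonneg hβ.1 hq) ?_
    simp only [sub_mul, Finset.sum_sub_distrib, sub_nonneg]
    exact sum_mul_le_of_forall_le (hβ.1 i q hq).1 (hβ.1 i q hq).2 (hmax q hq)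
  have htotal := (hPR.uExp_replace_sub_uExp i β c).symm.trans_le (sub_nonpos.2 (hβ.2 i c hc))
  have hzero := (Finset.sum_eq_zero_iff_of_nonneg hgain).1
    (htotal.antisymm (Finset.sum_nonneg hgain)) j (Finset.mem_range.2 hj)
  have heq := (mul_eq_zero.1 hzero).resolve_left hreach
  simp only [sub_mul, Finset.sum_sub_distrib, sub_eq_zero] at heq
  exact (supportedOnArgmax_iff_forall_le_sum (hβ.1 i j hj).1 (hβ.1 i j hj).2).2
    fun a ha => (hmax j hj a ha).trans_eq heq

theorem IsBehProfile.exists_isBelief_selfIndep (hβ : G.IsBehProfile β) :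
    ∃ μ : G.Belief, G.IsBelief μ ∧ G.SelfIndep β μ := by
  have hnormalize : ∀ i j, ∃ w : List ℕ → ℝ, j < G.m i →
      ((∀ h ∈ G.Info i j, 0 ≤ w h) ∧ ∑ h ∈ G.Info i j, w h = 1) ∧
        ∀ h ∈ G.Info i j, G.SInfo i j β * w h = G.Sh i β h := fun i j => by
    by_cases hj : j < G.m i
    · obtain ⟨w, hw⟩ := exists_sum_mul_eq (G.info_nonempty i j hj) fun h => Sh_nonneg hβ hj
      exact ⟨w, fun _ => hw⟩
    · exact ⟨0, fun h => absurd h hj⟩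
  choose μ hμ using hnormalize
  exact ⟨μ, fun i j hj => (hμ i j hj).1, fun i j hj => (hμ i j hj).2⟩

theorem PerfectRecall.exists_isBehProfile_supportedOnArgmax (hPR : G.PerfectRecall)
    (β : G.Profile) (U : Fin G.n → ℕ → G.Profile → ℕ → ℝ) :
    ∃ γ : G.Profile, G.IsBehProfile γ ∧ ∀ (i : Fin G.n) (j : ℕ), j < G.m i →
      SupportedOnArgmax (G.infoA i j) (γ i j) (U i j (G.rho i j β γ)) := by
  let depth (k : Σ i : Fin G.n, Fin (G.m i)) : ℕ := (G.infoRecord k.1 k.2).length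
  have hwf : WellFounded (InvImage (· > ·) depth) := Finite.wellFounded_of_trans_of_irrefl _
  let extend (f : (Σ i : Fin G.n, Fin (G.m i)) → ℕ → ℝ) : G.Profile :=
    fun i j => if hj : j < G.m i then f ⟨i, j, hj⟩ else 0
  have hrho : ∀ (k : Σ i : Fin G.n, Fin (G.m i)) (f g : (Σ i : Fin G.n, Fin (G.m i)) → ℕ → ℝ),
      (∀ k', depth k' > depth k → f k' = g k') →
      G.rho k.1 k.2 β (extend f) = G.rho k.1 k.2 β (extend g) := by
    intro k f g hfg
    funext p q
    refine if_ctx_congr Iff.rfl (fun hfol => ?_) fun _ => rfl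
    refine dite_congr rfl (fun hq => hfg _ ?_) fun _ => rfl
    exact hPR.length_infoRecord_lt_of_follows k.2.2 hq hfol.2
  obtain ⟨f, hf⟩ := exists_forall_of_wellFounded hwf (α := fun _ => ℕ → ℝ)
    (Q := fun k f x =>
      ((∀ a ∈ G.infoA k.1 k.2, 0 ≤ x a) ∧ ∑ a ∈ G.infoA k.1 k.2, x a = 1) ∧
        SupportedOnArgmax (G.infoA k.1 k.2) x (U k.1 k.2 (G.rho k.1 k.2 β (extend f))))
    (fun k f => exists_supportedOnArgmax (infoA_nonempty k.2.2) _)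
    (fun k f g x hfg hx => by rwa [← hrho k f g hfg])
  have hextend : ∀ i j (hj : j < G.m i), extend f i j = f ⟨i, j, hj⟩ := fun i j hj => dif_pos hj
  refine ⟨extend f, fun i j hj => ?_, fun i j hj => ?_⟩
  · rw [hextend i j hj]
    exact (hf ⟨i, j, hj⟩).1
  · rw [hextend i j hj]
    exact (hf ⟨i, j, hj⟩).2

end EFG

/-- If `β*` is a Nash equilibrium in behavioral strategies, then there exist an extra
behavioral strategy profile `β̃*` and a belief system `μ*` satisfying the Nash
characterization. -/
theorem stmt4 (G : EFG) (hPR : G.PerfectRecall)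
    (β : G.Profile) (hβ : G.IsNash β) :
    ∃ (βt : G.Profile) (μ : G.Belief), G.IsBehProfile βt ∧ G.NashChar β βt μ := by
  obtain ⟨μ, hμ, hself⟩ := hβ.1.exists_isBelief_selfIndep
  obtain ⟨βt, hβt, hcond⟩ := hPR.exists_isBehProfile_supportedOnArgmax β
    fun i j γ a => G.uCond i j a γ μ
  have hcont (i) : ∀ q < G.m i,
      SupportedOnArgmax (G.infoA i q) (βt i q) (EFG.contValue i β (βt i) q) := fun q hq =>
    .of_eq_const_mul (Finset.sum_nonneg fun _ => EFG.Sh_nonneg hβ.1 hq)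
      (fun _ ha => (hPR.SInfo_mul_uCond_rho hself hq ha βt).symm) fun _ => hcond i q hq
  have hwedge : ∀ i, ∀ j < G.m i, SupportedOnArgmax (G.infoA i j) (β i j)
      fun a => G.uWedgeAct i j a (G.rho i j β βt) := fun i j hj =>
    .of_eq_const_mul (hPR.realizationWeight_infoRecord_nonneg hβ.1 hj)
      (fun _ ha => hPR.uWedgeAct_rho hj ha β βt)
      (hβ.supportedOnArgmax_contValue hPR (hβt i) (hcont i) hj)
  exact ⟨βt, μ, hβt, hwedge, hcond, hμ, hself⟩
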